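/- arXiv:1305.4559 — 2 statements merged into one kernel-verified Lean document; each statement's English description precedes it below -/
import Mathlib

section
/- Let G be a finite connected simple graph on n ≥ 2 vertices, let (x_0, x_1, …) be a simple random walk on G started at a vertex x_0, and let t be a natural number with t ≤ n. Then E[ d(x_0, x_t) ] ≤ 1 + √n · √(1 + 5 log n). (In particular, the distance D₁ between the drunk's initial position and his position after the cop has walked to that initial position satisfies E[D₁] ≤ 1 + √n·√(1 + 5 log n), since the cop's travel time is at most the diameter of G, hence at most n.) -/
open scoped Classical

/-- One-step transition weight of the simple random walk on `G`:
`1/deg a` if `a ∼ b`, and `0` otherwise. -/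
noncomputable def stepWt {V : Type} [Fintype V] (G : SimpleGraph V) (a b : V) : ℝ :=
  if G.Adj a b then ((G.degree a : ℝ))⁻¹ else 0

/-- Probability that the simple random walk on `G` of length `t`, started at `x0`,
produces a trajectory satisfying the event `E`. -/
noncomputable def walkProb {V : Type} [Fintype V] (G : SimpleGraph V) (t : ℕ) (x0 : V)
    (E : (Fin (t + 1) → V) → Prop) : ℝ :=
  ∑ p : Fin (t + 1) → V,
    if p 0 = x0 ∧ E p then ∏ i : Fin t, stepWt G (p i.castSucc) (p i.succ) else 0

/-- Expectation of the functional `f` of the trajectory of the simple random walk on `G`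
of length `t`, started at `x0`. -/
noncomputable def walkExp {V : Type} [Fintype V] (G : SimpleGraph V) (t : ℕ) (x0 : V)
    (f : (Fin (t + 1) → V) → ℝ) : ℝ :=
  ∑ p : Fin (t + 1) → V,
    (if p 0 = x0 then ∏ i : Fin t, stepWt G (p i.castSucc) (p i.succ) else 0) * f p

/-!
The Varopoulos–Carne argument. If `P` is the transition operator of the walk, `P ^ t` is the average
of the Chebyshev operators `T k (P)` over the position `k` of a simple random walk on `ℤ` at time
`t`. As `P` is a self-adjoint contraction of `ℓ²(deg)`, so is each `T k (P)`, by the Pell equation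
`T k ^ 2 + (1 - X ^ 2) * U (k - 1) ^ 2 = 1`. Moreover `(T k (P) f) x` depends only on `f` within
distance `|k|` of `x`, so for `f = exp (l * dist x ·)` it is at most `n * exp (|l| * |k|)`.
Averaging over `k` gives
`E[exp (l * dist x x_t)] ≤ 2 * n * cosh l ^ t ≤ 2 * n * exp (t * l ^ 2 / 2)` for all real `l`. By
Jensen's inequality `m = E[dist x x_t]` then satisfies `l * m ≤ log (2 * n) + t * l ^ 2 / 2` for all
`l`, that is, `m ^ 2 ≤ 2 * t * log (2 * n)`.
-/

open Polynomial.Chebyshev (T U)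
open Polynomial (X aeval)

section Chebyshev

lemma chebyshev_T_sq (R : Type*) [CommRing R] (n : ℤ) :
    T R n ^ 2 = 1 - (1 - X ^ 2) * U R (n - 1) ^ 2 := by
  have hU : U R (n - 1) ^ 2 + U R n ^ 2 - 2 * X * U R (n - 1) * U R n = 1 := by
    have hS := congrArg (Polynomial.compRingHom (2 * X))
      (Polynomial.Chebyshev.S_sq_add_S_sq R (n - 1))
    simpa only [map_add, map_sub, map_mul, map_pow, map_one, Polynomial.coe_compRingHom_apply,
      Polynomial.X_comp, Polynomial.Chebyshev.S_comp_two_mul_X, sub_add_cancel] using hS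
  rw [Polynomial.Chebyshev.T_eq_U_sub_X_mul_U]
  linear_combination hU

lemma isSelfAdjoint_aeval {R M : Type*} [CommRing R] [AddCommGroup M] [Module R M]
    {B : LinearMap.BilinForm R M} {A : Module.End R M} (hA : B.IsSelfAdjoint A)
    (p : Polynomial R) : B.IsSelfAdjoint (aeval A p) := by
  intro u v
  induction p using Polynomial.induction_on generalizing u v with
  | C a => simp [Module.algebraMap_end_apply]
  | add p q hp hq => simp [hp, hq]
  | monomial n a ih =>
    set q := Polynomial.C a * X ^ n
    have hX_mul : Polynomial.C a * X ^ (n + 1) = X * q := by ring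
    have hmul_X : Polynomial.C a * X ^ (n + 1) = q * X := by ring
    calc B (aeval A (Polynomial.C a * X ^ (n + 1)) u) v
        = B (A (aeval A q u)) v := by simp [hX_mul]
      _ = B (aeval A q u) (A v) := hA _ v
      _ = B u (aeval A q (A v)) := ih u (A v)
      _ = B u (aeval A (Polynomial.C a * X ^ (n + 1)) v) := by simp [hmul_X]

lemma bilinForm_aeval_T_le {R M : Type*} [CommRing R] [PartialOrder R] [IsOrderedAddMonoid R]
    [AddCommGroup M] [Module R M] {B : LinearMap.BilinForm R M} {A : Module.End R M}
    (hA : B.IsSelfAdjoint A) (hcontr : ∀ u, B (A u) (A u) ≤ B u u) (k : ℤ) (u : M) :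
    B (aeval A (T R k) u) (aeval A (T R k) u) ≤ B u u := by
  set v := aeval A (U R (k - 1)) u with hv
  have hT : aeval A (T R k) (aeval A (T R k) u) =
      u - aeval A (U R (k - 1)) (v - A (A v)) := by
    have hpell : T R k * T R k = 1 - U R (k - 1) * (1 - X * X) * U R (k - 1) := by
      linear_combination chebyshev_T_sq R k
    simpa [hv] using congrArg (fun p => aeval A p u) hpell
  calc B (aeval A (T R k) u) (aeval A (T R k) u)
      = B u u - B v (v - A (A v)) := by
        rw [isSelfAdjoint_aeval hA, hT, map_sub, ← isSelfAdjoint_aeval hA]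
    _ = B u u - (B v v - B (A v) (A v)) := by rw [map_sub, hA]
    _ ≤ B u u := sub_le_self _ (sub_nonneg.2 (hcontr v))

lemma apply_X_pow_le_mul_cosh_pow (L : Polynomial ℝ →ₗ[ℝ] ℝ) {C l : ℝ}
    (hL : ∀ k : ℤ, L (T ℝ k) ≤ C * Real.cosh (l * k)) (t : ℕ) :
    L (X ^ t) ≤ C * Real.cosh l ^ t := by
  suffices h : ∀ k : ℤ, L (X ^ t * T ℝ k) ≤ C * Real.cosh (l * k) * Real.cosh l ^ t by
    simpa using h 0
  induction t with
  | zero => simpa using hL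
  | succ t ih =>
    intro k
    have hrec : (2 : ℝ) • (X ^ (t + 1) * T ℝ k) = X ^ t * T ℝ (k + 1) + X ^ t * T ℝ (k - 1) := by
      rw [Polynomial.Chebyshev.T_add_one, two_smul]
      ring
    have hcosh : Real.cosh (l * (k + 1 : ℤ)) + Real.cosh (l * (k - 1 : ℤ)) =
        2 * Real.cosh (l * k) * Real.cosh l := by
      push_cast
      rw [mul_add, mul_sub, mul_one, Real.cosh_add, Real.cosh_sub]
      ring
    have hLrec := congrArg L hrec
    rw [map_smul, map_add, smul_eq_mul] at hLrec
    linear_combination (ih (k + 1) + ih (k - 1) + hLrec + C * Real.cosh l ^ t * hcosh) / 2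

end Chebyshev

section Jensen

variable {ι : Type*} [Finite ι] {L : (ι → ℝ) →ₗ[ℝ] ℝ}

lemma convexOn_map_le_of_monotone (hmono : Monotone L) (hone : L 1 = 1) {φ : ℝ → ℝ}
    (hφ : ConvexOn ℝ Set.univ φ) (f : ι → ℝ) : φ (L f) ≤ L (φ ∘ f) := by
  have := Fintype.ofFinite ι
  set w : ι → ℝ := fun i => L (fun j => if i = j then 1 else 0)
  have hL (g : ι → ℝ) : L g = ∑ i, w i • g i := by
    simp only [L.pi_apply_eq_sum_univ g, smul_eq_mul, mul_comm, w]
  have hw (i : ι) : 0 ≤ w i := by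
    rw [← map_zero L]
    exact hmono fun j => by dsimp; split_ifs <;> norm_num
  have hsum : ∑ i, w i = 1 := by simpa [hone] using (hL 1).symm
  simpa only [hL, Function.comp_apply] using
    hφ.map_sum_le (fun i _ => hw i) hsum (fun i _ => Set.mem_univ (f i))

lemma le_sqrt_of_exp_moment_le (hmono : Monotone L) (hone : L 1 = 1) {f : ι → ℝ} {C s : ℝ}
    (hC : 0 < C) (hL : ∀ l : ℝ, L (fun i => Real.exp (l * f i)) ≤ C * Real.exp (s * l ^ 2 / 2)) :
    L f ≤ √(2 * s * Real.log C) := by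
  refine Real.le_sqrt_of_sq_le ?_
  have hquad (l : ℝ) : 0 ≤ s / 2 * (l * l) + -L f * l + Real.log C := by
    have hexp : Real.exp (l * L f) ≤ Real.exp (Real.log C + s * l ^ 2 / 2) :=
      calc Real.exp (l * L f) = Real.exp (L (l • f)) := by rw [map_smul, smul_eq_mul]
        _ ≤ L (fun i => Real.exp (l * f i)) :=
          convexOn_map_le_of_monotone hmono hone convexOn_exp (l • f)
        _ ≤ C * Real.exp (s * l ^ 2 / 2) := hL l
        _ = Real.exp (Real.log C + s * l ^ 2 / 2) := by rw [Real.exp_add, Real.exp_log hC]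
    linarith [Real.exp_le_exp.1 hexp]
  have hdiscrim := discrim_le_zero hquad
  rw [discrim] at hdiscrim
  linarith

end Jensen

section Transition

variable {V : Type} [Fintype V] (G : SimpleGraph V)

/-- The transition operator `P` of the simple random walk: `P f x` is the average of `f` over the
neighbors of `x`, and `0` if `x` is isolated. -/
noncomputable def transitionOp : Module.End ℝ (V → ℝ) :=
  Matrix.toLin' (Matrix.of (stepWt G))

/-- The inner product `∑ x, deg x * f x * g x` of `ℓ²(deg)`, for which the transition operator is
self-adjoint. -/
noncomputable def degreeForm : LinearMap.BilinForm ℝ (V → ℝ) :=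
  Matrix.toBilin' (Matrix.diagonal fun x => (G.degree x : ℝ))

lemma transitionOp_apply (f : V → ℝ) (x : V) :
    transitionOp G f x = ∑ y, stepWt G x y * f y := by
  simp [transitionOp, Matrix.mulVec, dotProduct]

lemma degreeForm_apply (f g : V → ℝ) : degreeForm G f g = ∑ x, G.degree x * (f x * g x) := by
  simp only [degreeForm, Matrix.toBilin'_apply', dotProduct, Matrix.mulVec_diagonal]
  exact Finset.sum_congr rfl fun x _ => by ring

lemma stepWt_nonneg (x y : V) : 0 ≤ stepWt G x y := by
  unfold stepWt
  split_ifs <;> positivity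

lemma degree_mul_stepWt (x y : V) : G.degree x * stepWt G x y = if G.Adj x y then 1 else 0 := by
  unfold stepWt
  split_ifs with hxy
  · exact mul_inv_cancel₀ (by exact_mod_cast ((G.degree_pos_iff_exists_adj x).2 ⟨y, hxy⟩).ne')
  · exact mul_zero _

lemma transitionOp_isSelfAdjoint : (degreeForm G).IsSelfAdjoint (transitionOp G) := by
  intro f g
  simp only [degreeForm_apply, transitionOp_apply, Finset.sum_mul, Finset.mul_sum]
  rw [Finset.sum_comm]
  refine Finset.sum_congr rfl fun x _ => Finset.sum_congr rfl fun y _ => ?_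
  have hrev : G.degree x * stepWt G x y = G.degree y * stepWt G y x := by
    simp only [degree_mul_stepWt, G.adj_comm]
  linear_combination -f x * g y * hrev

lemma transitionOp_monotone : Monotone (transitionOp G) := fun f g hfg x => by
  simp only [transitionOp_apply]
  gcongr with y
  · exact stepWt_nonneg G x y
  · exact hfg y

lemma transitionOp_pow_monotone (t : ℕ) : Monotone ⇑(transitionOp G ^ t) := by
  rw [Module.End.coe_pow]
  exact (transitionOp_monotone G).iterate t

lemma transitionOp_pow_congr {x : V} {t : ℕ} {f g : V → ℝ}
    (hfg : ∀ y (w : G.Walk x y), w.length = t → f y = g y) :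
    (transitionOp G ^ t) f x = (transitionOp G ^ t) g x := by
  induction t generalizing x with
  | zero => exact hfg x .nil rfl
  | succ t ih =>
    simp only [pow_succ', Module.End.mul_apply, transitionOp_apply]
    refine Finset.sum_congr rfl fun z _ => ?_
    by_cases hxz : G.Adj x z
    · rw [ih fun y w hw => hfg y (.cons hxz w) (by simp [hw])]
    · simp [stepWt, hxz]

lemma aeval_transitionOp_congr {x : V} {p : Polynomial ℝ} {f g : V → ℝ}
    (hfg : ∀ y, G.dist x y ≤ p.natDegree → f y = g y) :
    aeval (transitionOp G) p f x = aeval (transitionOp G) p g x := by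
  simp only [Polynomial.aeval_eq_sum_range, LinearMap.sum_apply, Finset.sum_apply,
    LinearMap.smul_apply, Pi.smul_apply]
  refine Finset.sum_congr rfl fun i hi => ?_
  rw [transitionOp_pow_congr G fun y w hw => hfg y ?_]
  exact (SimpleGraph.dist_le w).trans (hw ▸ Finset.mem_range_succ_iff.1 hi)

variable {G}

lemma transitionOp_one (hdeg : ∀ x, 0 < G.degree x) : transitionOp G 1 = 1 := by
  ext x
  have hx : (G.degree x : ℝ) ≠ 0 := by exact_mod_cast (hdeg x).ne'
  refine mul_left_cancel₀ hx ?_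
  simp only [transitionOp_apply, Finset.mul_sum, Pi.one_apply, mul_one, degree_mul_stepWt]
  rw [Finset.sum_boole, ← SimpleGraph.neighborFinset_eq_filter, G.card_neighborFinset_eq_degree]

lemma transitionOp_pow_one (hdeg : ∀ x, 0 < G.degree x) (t : ℕ) :
    (transitionOp G ^ t) 1 = 1 := by
  rw [Module.End.pow_apply]
  exact Function.iterate_fixed (transitionOp_one hdeg) t

lemma degreeForm_transitionOp_le (hdeg : ∀ x, 0 < G.degree x) (f : V → ℝ) :
    degreeForm G (transitionOp G f) (transitionOp G f) ≤ degreeForm G f f := by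
  have hjensen (x : V) : transitionOp G f x ^ 2 ≤ transitionOp G (f ^ 2) x :=
    convexOn_map_le_of_monotone (L := LinearMap.proj x ∘ₗ transitionOp G)
      (fun _ _ hgh => transitionOp_monotone G hgh x) (congrFun (transitionOp_one hdeg) x)
      even_two.convexOn_pow f
  calc degreeForm G (transitionOp G f) (transitionOp G f)
      ≤ degreeForm G (transitionOp G (f ^ 2)) 1 := by
        simp only [degreeForm_apply, Pi.one_apply, mul_one, ← sq]
        gcongr with x
        exact hjensen x
    _ = degreeForm G (f ^ 2) 1 := by rw [transitionOp_isSelfAdjoint, transitionOp_one hdeg]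
    _ = degreeForm G f f := by simp [degreeForm_apply, sq]

lemma abs_aeval_T_transitionOp_le (hdeg : ∀ x, 0 < G.degree x) {f : V → ℝ} {M : ℝ}
    (hf : ∀ y, |f y| ≤ M) (k : ℤ) (x : V) :
    |aeval (transitionOp G) (T ℝ k) f x| ≤ Fintype.card V * M := by
  set g := aeval (transitionOp G) (T ℝ k) f
  have hM : 0 ≤ M := (abs_nonneg _).trans (hf x)
  have hdeg_x : (1 : ℝ) ≤ G.degree x := by exact_mod_cast hdeg x
  refine abs_le_of_sq_le_sq ?_ (by positivity)
  calc g x ^ 2 ≤ G.degree x * (g x * g x) := by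
        rw [← sq]
        exact le_mul_of_one_le_left (sq_nonneg _) hdeg_x
    _ ≤ degreeForm G g g := by
        rw [degreeForm_apply]
        exact Finset.single_le_sum (f := fun y => G.degree y * (g y * g y))
          (fun y _ => mul_nonneg (Nat.cast_nonneg _) (mul_self_nonneg _)) (Finset.mem_univ x)
    _ ≤ degreeForm G f f :=
        bilinForm_aeval_T_le (transitionOp_isSelfAdjoint G) (degreeForm_transitionOp_le hdeg) k f
    _ ≤ ∑ _y : V, (Fintype.card V : ℝ) * M ^ 2 := by
        rw [degreeForm_apply]
        gcongr with y
        · exact mul_self_nonneg _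
        · exact (G.degree_lt_card_verts y).le
        · rw [← sq]
          exact sq_le_sq' (abs_le.1 (hf y)).1 (abs_le.1 (hf y)).2
    _ = (Fintype.card V * M) ^ 2 := by
        rw [Finset.sum_const, Finset.card_univ, nsmul_eq_mul]
        ring

lemma aeval_T_transitionOp_exp_dist_le (hdeg : ∀ x, 0 < G.degree x) (l : ℝ) (k : ℤ) (x : V) :
    aeval (transitionOp G) (T ℝ k) (fun y => Real.exp (l * G.dist x y)) x ≤
      2 * Fintype.card V * Real.cosh (l * k) := by
  set g : V → ℝ := fun y => Real.exp (l * (min (G.dist x y) k.natAbs : ℕ))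
  have hg (y : V) : |g y| ≤ Real.exp |l * k| := by
    rw [abs_of_pos (Real.exp_pos _), abs_mul, ← Int.cast_abs, ← Nat.cast_natAbs]
    gcongr
    · exact le_abs_self l
    · exact min_le_right _ _
  calc aeval (transitionOp G) (T ℝ k) (fun y => Real.exp (l * G.dist x y)) x
      = aeval (transitionOp G) (T ℝ k) g x := aeval_transitionOp_congr G fun y hy => by
        rw [Polynomial.Chebyshev.natDegree_T] at hy
        simp only [g, min_eq_left hy]
    _ ≤ Fintype.card V * Real.exp |l * k| :=
        (le_abs_self _).trans (abs_aeval_T_transitionOp_le hdeg hg k x)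
    _ ≤ Fintype.card V * (2 * Real.cosh (l * k)) := by
        gcongr
        rw [← Real.cosh_abs, Real.cosh_eq]
        linarith [Real.exp_pos (-|l * k|)]
    _ = 2 * Fintype.card V * Real.cosh (l * k) := by ring

lemma transitionOp_pow_exp_dist_le (hdeg : ∀ x, 0 < G.degree x) (l : ℝ) (t : ℕ) (x : V) :
    (transitionOp G ^ t) (fun y => Real.exp (l * G.dist x y)) x ≤
      2 * Fintype.card V * Real.exp (t * l ^ 2 / 2) := by
  set L : Polynomial ℝ →ₗ[ℝ] ℝ := LinearMap.proj x ∘ₗ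
    LinearMap.applyₗ (fun y => Real.exp (l * G.dist x y)) ∘ₗ (aeval (transitionOp G)).toLinearMap
  calc (transitionOp G ^ t) (fun y => Real.exp (l * G.dist x y)) x
      = L (X ^ t) := by simp [L]
    _ ≤ 2 * Fintype.card V * Real.cosh l ^ t :=
        apply_X_pow_le_mul_cosh_pow L
          (fun k => aeval_T_transitionOp_exp_dist_le hdeg l k x) t
    _ ≤ 2 * Fintype.card V * Real.exp (l ^ 2 / 2) ^ t := by
        gcongr
        exact Real.cosh_le_exp_half_sq l
    _ = 2 * Fintype.card V * Real.exp (t * l ^ 2 / 2) := by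
        rw [← Real.exp_nat_mul, mul_div_assoc]

end Transition

section WalkExp

variable {V : Type} [Fintype V] (G : SimpleGraph V)

lemma walkExp_zero (x : V) (f : (Fin 1 → V) → ℝ) : walkExp G 0 x f = f (fun _ => x) := by
  unfold walkExp
  rw [Fintype.sum_eq_single fun _ => x]
  · simp
  · intro p hp
    have hp0 : p 0 ≠ x := fun h => hp (funext fun i => by rwa [Fin.fin_one_eq_zero i])
    simp [hp0]

lemma walkExp_succ (t : ℕ) (x : V) (f : (Fin (t + 2) → V) → ℝ) :
    walkExp G (t + 1) x f =
      ∑ z, stepWt G x z * walkExp G t z (fun p => f (Fin.cons x p)) := by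
  unfold walkExp
  rw [← (Fin.consEquiv fun _ => V).sum_comp, Fintype.sum_prod_type]
  simp only [Fin.consEquiv_apply, Fin.cons_zero]
  rw [Finset.sum_eq_single x (by simp +contextual) (by simp)]
  simp_rw [Finset.mul_sum]
  rw [Finset.sum_comm]
  refine Finset.sum_congr rfl fun p _ => ?_
  rw [Finset.sum_eq_single (p 0) (by simp +contextual [eq_comm]) (by simp), Fin.prod_univ_succ]
  simp only [if_true, Fin.castSucc_zero, Fin.cons_zero, Fin.cons_succ, ← Fin.succ_castSucc]
  rw [mul_assoc]
  rfl

lemma walkExp_last_eq_transitionOp_pow (t : ℕ) (x : V) (f : V → ℝ) :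
    walkExp G t x (fun p => f (p (Fin.last t))) = (transitionOp G ^ t) f x := by
  induction t generalizing x with
  | zero => simp [walkExp_zero]
  | succ t ih =>
    simp only [walkExp_succ, ← Fin.succ_last, Fin.cons_succ, ih, pow_succ', Module.End.mul_apply,
      transitionOp_apply]

end WalkExp

lemma sqrt_two_mul_log_two_mul_le {n t : ℝ} (hn : 2 ≤ n) (ht : t ≤ n) :
    √(2 * t * Real.log (2 * n)) ≤ 1 + √n * √(1 + 5 * Real.log n) := by
  have hlog : Real.log 2 ≤ Real.log n := Real.log_le_log two_pos hn
  have hlog_two : 0 < Real.log 2 := Real.log_pos one_lt_two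
  have hlog_mul : Real.log (2 * n) = Real.log 2 + Real.log n :=
    Real.log_mul two_ne_zero (by positivity)
  calc √(2 * t * Real.log (2 * n)) ≤ √(n * (1 + 5 * Real.log n)) := by
        refine Real.sqrt_le_sqrt ?_
        rw [hlog_mul]
        calc 2 * t * (Real.log 2 + Real.log n) ≤ 2 * n * (Real.log 2 + Real.log n) := by
              gcongr
              linarith
          _ = n * (2 * (Real.log 2 + Real.log n)) := by ring
          _ ≤ n * (1 + 5 * Real.log n) := by
              gcongr
              linarith
    _ = √n * √(1 + 5 * Real.log n) := Real.sqrt_mul (by positivity) _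
    _ ≤ 1 + √n * √(1 + 5 * Real.log n) := by linarith

theorem expected_distance_bound_of_time_le_general {V : Type} [Fintype V] (G : SimpleGraph V)
    (hdeg : ∀ x, 0 < G.degree x) (x0 : V) (t : ℕ) :
    walkExp G t x0 (fun p => (G.dist x0 (p (Fin.last t)) : ℝ))
      ≤ √(2 * t * Real.log (2 * Fintype.card V)) := by
  have hcard : 0 < Fintype.card V := Fintype.card_pos_iff.2 ⟨x0⟩
  rw [walkExp_last_eq_transitionOp_pow G t x0 fun y => (G.dist x0 y : ℝ)]
  exact le_sqrt_of_exp_moment_le (L := LinearMap.proj x0 ∘ₗ (transitionOp G ^ t))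
    (fun _ _ hfg => transitionOp_pow_monotone G t hfg x0)
    (congrFun (transitionOp_pow_one hdeg t) x0) (by positivity)
    (fun l => transitionOp_pow_exp_dist_le hdeg l t x0)

/-- If `t ≤ n`, the expected distance covered in time `t` by a simple random walk on a
connected simple graph on `n ≥ 2` vertices is at most `1 + √n·√(1 + 5 log n)`.
(This bounds `E[D₁]`, since the cop's Stage-1 travel time is at most `diam(G) ≤ n`.) -/
theorem expected_distance_bound_of_time_le {V : Type} [Fintype V] (G : SimpleGraph V) (n : ℕ)
    (hn : 2 ≤ n) (hcard : Fintype.card V = n) (hconn : G.Connected) (x0 : V) (t : ℕ)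
    (ht : t ≤ n) :
    walkExp G t x0 (fun p => (G.dist x0 (p (Fin.last t)) : ℝ))
      ≤ 1 + Real.sqrt n * Real.sqrt (1 + 5 * Real.log n) := by
  have : Nontrivial V := Fintype.one_lt_card_iff_nontrivial.1 (by omega)
  refine (expected_distance_bound_of_time_le_general G
    (fun x => hconn.preconnected.degree_pos_of_nontrivial x) x0 t).trans ?_
  rw [hcard]
  exact sqrt_two_mul_log_two_mul_le (by exact_mod_cast hn) (by exact_mod_cast ht)
end

section
/- Let G be a finite connected simple graph on n ≥ 2 vertices, let (x_0, x_1, …) be a simple random walk on G started at a vertex x_0, and let S be an ℕ-valued random variable independent of the walk with E[S] ≤ 1 + √n·√(1 + 5 log n). Then E[ d(x_0, x_S) ] ≤ 1 + √(1 + 5 log n) · √( 1 + √n·√(1 + 5 log n) ). (This is the bound E[D₂] on the distance the drunk travels during the second stage of the cop's strategy, obtained from the key lemma together with Jensen's inequality; it is O(n^{1/4}(log n)^{3/4}).) -/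
open scoped Classical

/-! The heart of the argument is the Varopoulos–Carne bound for a chain `P` reversible with respect
to `w`: `Pᵗ(x, y) ≤ 2 √(w y / w x) exp (-d(x, y)² / 2t)`. In the basis of Chebyshev polynomials,
`Pᵗ = E[T_{|Y_t|}(P)]` for the simple random walk `Y` on `ℤ` started at `0`; the terms of degree
below `d(x, y)` do not contribute to the entry `(x, y)`, and the others are at most `√(w y / w x)`
since `T_k(P)` is a contraction of `ℓ²(w)`. Summing over the end point of the walk gives
`E[exp (d(x₀, x_t)² / 2t)] ≤ 2 n √n`, and three applications of Jensen's inequality bound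
`E[d(x₀, x_t)²]` by `5 t log n`, then `E[d(x₀, x_t)]` by `√(5 t log n)`, and finally `E[√S]` by
`√(E[S])`. -/

open Matrix Polynomial

section Chebyshev

theorem chebyshev_T_sq_add_one_sub_X_sq_mul_U_sq (R : Type*) [CommRing R] (n : ℤ) :
    Chebyshev.T R n ^ 2 + (1 - X ^ 2) * Chebyshev.U R (n - 1) ^ 2 = 1 := by
  have shift (n : ℤ) :
      Chebyshev.T R (n + 1) ^ 2 + (1 - X ^ 2) * Chebyshev.U R n ^ 2 =
        Chebyshev.T R n ^ 2 + (1 - X ^ 2) * Chebyshev.U R (n - 1) ^ 2 := by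
    have hT := Chebyshev.T_eq_X_mul_T_sub_pol_U R (n - 1)
    have hU := Chebyshev.U_eq_X_mul_U_add_T R (n - 1)
    rw [show n - 1 + 2 = n + 1 by ring, sub_add_cancel] at hT
    rw [sub_add_cancel] at hU
    rw [hT, hU]
    ring
  induction n with
  | zero => simp
  | succ n ih => rwa [add_sub_cancel_right, shift]
  | pred n ih => rwa [← shift, sub_add_cancel]

theorem X_mul_chebyshev_T (R : Type*) [Field R] [NeZero (2 : R)] (n : ℤ) :
    X * Chebyshev.T R n = (1 / 2 : R) • (Chebyshev.T R (n + 1) + Chebyshev.T R (n - 1)) := by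
  rw [eq_comm, one_div, inv_smul_eq_iff₀ two_ne_zero, Chebyshev.T_add_one, two_smul]
  ring

/-- Iterating `X T_k = (T_{k+1} + T_{k-1}) / 2` moves `k` along a simple random walk on `ℤ`, for
which `k ↦ cosh (l k)` is an eigenfunction with eigenvalue `cosh l`. -/
theorem abs_map_X_pow_mul_chebyshev_T_le (φ : ℝ[X] →ₗ[ℝ] ℝ) {c l : ℝ}
    (hφ : ∀ k : ℤ, |φ (Chebyshev.T ℝ k)| ≤ c * Real.cosh (l * k)) (t : ℕ) (k : ℤ) :
    |φ (X ^ t * Chebyshev.T ℝ k)| ≤ c * Real.cosh l ^ t * Real.cosh (l * k) := by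
  induction t generalizing k with
  | zero => simpa using hφ k
  | succ t ih =>
    have eigen : Real.cosh l * Real.cosh (l * k) =
        1 / 2 * (Real.cosh (l * (k + 1 : ℤ)) + Real.cosh (l * (k - 1 : ℤ))) := by
      push_cast
      rw [mul_add l, mul_sub l, mul_one, Real.cosh_add, Real.cosh_sub]
      ring
    calc |φ (X ^ (t + 1) * Chebyshev.T ℝ k)|
        = 1 / 2 * |φ (X ^ t * Chebyshev.T ℝ (k + 1)) + φ (X ^ t * Chebyshev.T ℝ (k - 1))| := by
          rw [pow_succ, mul_assoc, X_mul_chebyshev_T, mul_smul_comm, map_smul, mul_add, map_add,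
            smul_eq_mul, abs_mul, abs_of_pos one_half_pos]
      _ ≤ 1 / 2 * (c * Real.cosh l ^ t * Real.cosh (l * (k + 1 : ℤ)) +
            c * Real.cosh l ^ t * Real.cosh (l * (k - 1 : ℤ))) := by
          gcongr
          exact (abs_add_le _ _).trans (add_le_add (ih _) (ih _))
      _ = c * Real.cosh l ^ (t + 1) * Real.cosh (l * k) := by
          linear_combination -(c * Real.cosh l ^ t) * eigen

end Chebyshev

section Propagation

variable {V R : Type*} [Fintype V] [DecidableEq V] [CommSemiring R] {P : Matrix V V R}
  {G : SimpleGraph V}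

theorem edist_le_of_pow_apply_ne_zero (hP : ∀ x y, P x y ≠ 0 → G.edist x y ≤ 1) {t : ℕ} {x y : V}
    (h : (P ^ t) x y ≠ 0) : G.edist x y ≤ t := by
  induction t generalizing y with
  | zero =>
    obtain rfl : x = y := by_contra fun hxy ↦ h (by rw [pow_zero, one_apply_ne hxy])
    simp
  | succ t ih =>
    rw [pow_succ, mul_apply] at h
    obtain ⟨z, -, hz⟩ := Finset.exists_ne_zero_of_sum_ne_zero h
    calc G.edist x y ≤ G.edist x z + G.edist z y := G.edist_triangle
      _ ≤ t + 1 := add_le_add (ih (left_ne_zero_of_mul hz)) (hP z y (right_ne_zero_of_mul hz))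
      _ = (t + 1 : ℕ) := by push_cast; rfl

theorem aeval_apply_eq_zero_of_natDegree_lt_dist (hP : ∀ x y, P x y ≠ 0 → G.edist x y ≤ 1)
    {p : R[X]} {x y : V} (h : p.natDegree < G.dist x y) : aeval P p x y = 0 := by
  rw [aeval_eq_sum_range, Matrix.sum_apply]
  refine Finset.sum_eq_zero fun k hk ↦ ?_
  have hk' : (P ^ k) x y = 0 := by
    by_contra hne
    have := ENat.toNat_le_of_le_natCast (edist_le_of_pow_apply_ne_zero hP hne)
    exact (h.trans_le this).not_ge (Finset.mem_range_succ_iff.1 hk)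
  rw [Matrix.smul_apply, hk', smul_zero]

end Propagation

/-- The detailed balance equations: the kernel `P` is reversible with respect to the weight `w`,
which need not be normalized. -/
def DetailedBalance {V R : Type*} [Mul R] (w : V → R) (P : Matrix V V R) : Prop :=
  ∀ x y, w x * P x y = w y * P y x

namespace DetailedBalance

section CommRing

variable {V R : Type*} [Fintype V] [CommRing R] {w : V → R} {P Q : Matrix V V R}

theorem mul_of_commute (hP : DetailedBalance w P) (hQ : DetailedBalance w Q) (h : Commute P Q) :
    DetailedBalance w (P * Q) := fun x y ↦ by
  conv_rhs => rw [h.eq]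
  simp only [mul_apply, Finset.mul_sum]
  refine Finset.sum_congr rfl fun z _ ↦ ?_
  linear_combination Q z y * hP x z + P z x * hQ z y

theorem polynomial_aeval [DecidableEq V] (hP : DetailedBalance w P) (p : R[X]) :
    DetailedBalance w (aeval P p) := by
  have pow (k : ℕ) : DetailedBalance w (P ^ k) := by
    induction k with
    | zero =>
      intro x y
      rcases eq_or_ne x y with rfl | hxy
      · rfl
      · simp [one_apply_ne hxy, one_apply_ne hxy.symm]
    | succ k ih =>
      rw [pow_succ]
      exact ih.mul_of_commute hP (Commute.pow_self P k)
  intro x y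
  simp only [aeval_eq_sum_range, Matrix.sum_apply, Matrix.smul_apply, smul_eq_mul, Finset.mul_sum]
  refine Finset.sum_congr rfl fun k _ ↦ ?_
  linear_combination p.coeff k * pow k x y

theorem sum_mul_apply_sq (hP : DetailedBalance w P) (y : V) :
    ∑ x, w x * P x y ^ 2 = w y * (P * P) y y := by
  rw [mul_apply, Finset.mul_sum]
  refine Finset.sum_congr rfl fun x _ ↦ ?_
  linear_combination P x y * hP x y

end CommRing

variable {V : Type*} [Fintype V] [DecidableEq V] {w : V → ℝ} {P : Matrix V V ℝ}

theorem sum_mul_mulVec_sq_le (hrev : DetailedBalance w P) (hP : P ∈ rowStochastic ℝ V)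
    (hw : ∀ x, 0 ≤ w x) (f : V → ℝ) : ∑ x, w x * (P *ᵥ f) x ^ 2 ≤ ∑ x, w x * f x ^ 2 := by
  obtain ⟨hnonneg, hsum⟩ := mem_rowStochastic_iff_sum.1 hP
  have jensen (x : V) : (P *ᵥ f) x ^ 2 ≤ ∑ y, P x y * f y ^ 2 :=
    Real.pow_arith_mean_le_arith_mean_pow_of_even _ _ _ (fun y _ ↦ hnonneg x y) (hsum x) even_two
  calc ∑ x, w x * (P *ᵥ f) x ^ 2
      ≤ ∑ x, w x * ∑ y, P x y * f y ^ 2 :=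
        Finset.sum_le_sum fun x _ ↦ mul_le_mul_of_nonneg_left (jensen x) (hw x)
    _ = ∑ y, ∑ x, P y x * (w y * f y ^ 2) := by
        simp only [Finset.mul_sum]
        rw [Finset.sum_comm]
        refine Finset.sum_congr rfl fun y _ ↦ Finset.sum_congr rfl fun x _ ↦ ?_
        linear_combination f y ^ 2 * hrev x y
    _ = ∑ y, w y * f y ^ 2 := by simp only [← Finset.sum_mul, hsum, one_mul]

/-- Evaluated at `P`, Pell's equation `T_k² + U_{k-1}² = 1 + (X U_{k-1})²` compares `ℓ²(w)` norms,
and `P` contracts the column of `U_{k-1}`. -/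
theorem sum_mul_aeval_chebyshev_T_sq_le (hrev : DetailedBalance w P) (hP : P ∈ rowStochastic ℝ V)
    (hw : ∀ x, 0 ≤ w x) (k : ℤ) (y : V) :
    ∑ x, w x * (aeval P (Chebyshev.T ℝ k)) x y ^ 2 ≤ w y := by
  set T := aeval P (Chebyshev.T ℝ k)
  set U := aeval P (Chebyshev.U ℝ (k - 1)) with hU
  have hPU : aeval P (X * Chebyshev.U ℝ (k - 1)) = P * U := by simp [hU]
  have pell : T * T + U * U = 1 + P * U * (P * U) := by
    rw [← hPU, ← map_mul, ← map_mul, ← map_mul, ← map_add, ← map_one (aeval (R := ℝ) P),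
      ← map_add]
    congr 1
    linear_combination chebyshev_T_sq_add_one_sub_X_sq_mul_U_sq ℝ k
  have pell_norm : ∑ x, w x * T x y ^ 2 + ∑ x, w x * U x y ^ 2 =
      w y + ∑ x, w x * (P * U) x y ^ 2 := by
    rw [(hrev.polynomial_aeval _).sum_mul_apply_sq, (hrev.polynomial_aeval _).sum_mul_apply_sq,
      (hPU ▸ hrev.polynomial_aeval _ : DetailedBalance w (P * U)).sum_mul_apply_sq, ← mul_add,
      ← Matrix.add_apply, pell, Matrix.add_apply, one_apply_eq]
    ring
  have contraction : ∑ x, w x * (P * U) x y ^ 2 ≤ ∑ x, w x * U x y ^ 2 :=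
    hrev.sum_mul_mulVec_sq_le hP hw fun x ↦ U x y
  linarith

theorem abs_aeval_chebyshev_T_apply_le (hrev : DetailedBalance w P) (hP : P ∈ rowStochastic ℝ V)
    (hw : ∀ x, 0 ≤ w x) {x : V} (hx : 0 < w x) (k : ℤ) (y : V) :
    |(aeval P (Chebyshev.T ℝ k)) x y| ≤ √(w y / w x) := by
  refine Real.abs_le_sqrt ((le_div_iff₀' hx).2 ?_)
  refine le_trans ?_ (hrev.sum_mul_aeval_chebyshev_T_sq_le hP hw k y)
  exact Finset.single_le_sum (f := fun z ↦ w z * (aeval P (Chebyshev.T ℝ k)) z y ^ 2)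
    (fun z _ ↦ mul_nonneg (hw z) (sq_nonneg _)) (Finset.mem_univ x)

variable {G : SimpleGraph V}

theorem abs_pow_apply_le_cosh_pow_div_cosh (hrev : DetailedBalance w P)
    (hP : P ∈ rowStochastic ℝ V) (hw : ∀ x, 0 ≤ w x) (hG : ∀ x y, P x y ≠ 0 → G.edist x y ≤ 1)
    {x : V} (hx : 0 < w x) (y : V) (t : ℕ) (l : ℝ) :
    |(P ^ t) x y| ≤ √(w y / w x) * (Real.cosh l ^ t / Real.cosh (l * G.dist x y)) := by
  let φ : ℝ[X] →ₗ[ℝ] ℝ := Matrix.entryLinearMap ℝ ℝ x y ∘ₗ (aeval P).toLinearMap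
  have cosh_pos := Real.cosh_pos (l * G.dist x y)
  have hφ (k : ℤ) : |φ (Chebyshev.T ℝ k)| ≤
      √(w y / w x) / Real.cosh (l * G.dist x y) * Real.cosh (l * k) := by
    change |(aeval P (Chebyshev.T ℝ k)) x y| ≤ _
    rcases lt_or_ge k.natAbs (G.dist x y) with hk | hk
    · rw [aeval_apply_eq_zero_of_natDegree_lt_dist hG (by rwa [Chebyshev.natDegree_T]), abs_zero]
      positivity
    · have cosh_le : Real.cosh (l * G.dist x y) ≤ Real.cosh (l * k) := by
        rw [Real.cosh_le_cosh, abs_mul, abs_mul, Nat.abs_cast, ← Int.cast_abs, ← Nat.cast_natAbs]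
        gcongr
      rw [div_mul_eq_mul_div, mul_div_assoc]
      exact (hrev.abs_aeval_chebyshev_T_apply_le hP hw hx k y).trans
        (le_mul_of_one_le_right (Real.sqrt_nonneg _) ((one_le_div cosh_pos).2 cosh_le))
  have := abs_map_X_pow_mul_chebyshev_T_le φ hφ t 0
  simpa [φ, div_mul_eq_mul_div, mul_div_assoc] using this

theorem varopoulos_carne (hrev : DetailedBalance w P)
    (hP : P ∈ rowStochastic ℝ V) (hw : ∀ x, 0 ≤ w x) (hG : ∀ x y, P x y ≠ 0 → G.edist x y ≤ 1)
    {x : V} (hx : 0 < w x) (y : V) {t : ℕ} (ht : t ≠ 0) :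
    |(P ^ t) x y| ≤ 2 * √(w y / w x) * Real.exp (-((G.dist x y : ℝ) ^ 2 / (2 * t))) := by
  set d : ℝ := (G.dist x y : ℝ)
  -- `l = d / t` minimizes `t l² / 2 - l d`.
  have cosh_pow_le : Real.cosh (d / t) ^ t ≤ Real.exp (d ^ 2 / (2 * t)) :=
    calc Real.cosh (d / t) ^ t ≤ Real.exp ((d / t) ^ 2 / 2) ^ t :=
          pow_le_pow_left₀ (Real.cosh_pos _).le (Real.cosh_le_exp_half_sq _) t
      _ = Real.exp (d ^ 2 / (2 * t)) := by
          rw [← Real.exp_nat_mul]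
          congr 1
          field_simp
  have le_cosh : Real.exp (d / t * d) / 2 ≤ Real.cosh (d / t * d) := by
    rw [Real.cosh_eq]
    gcongr
    exact le_add_of_nonneg_right (Real.exp_pos _).le
  calc |(P ^ t) x y|
      ≤ √(w y / w x) * (Real.cosh (d / t) ^ t / Real.cosh (d / t * d)) :=
        hrev.abs_pow_apply_le_cosh_pow_div_cosh hP hw hG hx y t (d / t)
    _ ≤ √(w y / w x) * (Real.exp (d ^ 2 / (2 * t)) / (Real.exp (d / t * d) / 2)) := by gcongr
    _ = 2 * √(w y / w x) * Real.exp (d ^ 2 / (2 * t) - d / t * d) := by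
        rw [Real.exp_sub]
        field_simp
    _ = 2 * √(w y / w x) * Real.exp (-(d ^ 2 / (2 * t))) := by
        congr 2
        field_simp
        ring

theorem sum_pow_apply_mul_dist_sq_le (hrev : DetailedBalance w P)
    (hP : P ∈ rowStochastic ℝ V) (hw : ∀ x, 0 ≤ w x) (hG : ∀ x y, P x y ≠ 0 → G.edist x y ≤ 1)
    {x : V} (hx : 0 < w x) (t : ℕ) :
    ∑ y, (P ^ t) x y * (G.dist x y : ℝ) ^ 2 ≤ 2 * t * Real.log (2 * ∑ y, √(w y / w x)) := by
  rcases eq_or_ne t 0 with rfl | ht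
  · simp [one_apply]
  obtain ⟨hnonneg, hsum⟩ := mem_rowStochastic_iff_sum.1 (pow_mem hP t)
  let u (y : V) : ℝ := (G.dist x y : ℝ) ^ 2 / (2 * t)
  have exp_moment : ∑ y, (P ^ t) x y * Real.exp (u y) ≤ 2 * ∑ y, √(w y / w x) := by
    rw [Finset.mul_sum]
    refine Finset.sum_le_sum fun y _ ↦ ?_
    rw [← le_div_iff₀ (Real.exp_pos _), div_eq_mul_inv, ← Real.exp_neg]
    exact (le_abs_self _).trans (hrev.varopoulos_carne hP hw hG hx y ht)
  have jensen : Real.exp (∑ y, (P ^ t) x y * u y) ≤ ∑ y, (P ^ t) x y * Real.exp (u y) :=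
    convexOn_exp.map_sum_le (fun y _ ↦ hnonneg x y) (hsum x) fun _ _ ↦ Set.mem_univ _
  calc ∑ y, (P ^ t) x y * (G.dist x y : ℝ) ^ 2 = 2 * t * ∑ y, (P ^ t) x y * u y := by
        rw [Finset.mul_sum]
        refine Finset.sum_congr rfl fun y _ ↦ ?_
        simp only [u]
        field_simp
    _ ≤ 2 * t * Real.log (2 * ∑ y, √(w y / w x)) := by
        have exp_le := jensen.trans exp_moment
        gcongr
        exact (Real.le_log_iff_exp_le ((Real.exp_pos _).trans_le exp_le)).2 exp_le

end DetailedBalance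

section SimpleRandomWalk

variable {V : Type} [Fintype V]

/-- The transition matrix of the simple random walk on `G`, with zero rows at isolated vertices. -/
noncomputable def stepMatrix (G : SimpleGraph V) : Matrix V V ℝ :=
  Matrix.of (stepWt G)

variable {G : SimpleGraph V}

theorem stepMatrix_mem_rowStochastic (hdeg : ∀ v, 0 < G.degree v) :
    stepMatrix G ∈ rowStochastic ℝ V := by
  refine mem_rowStochastic_iff_sum.2 ⟨fun x y ↦ ?_, fun x ↦ ?_⟩
  · simp only [stepMatrix, of_apply, stepWt]
    positivity
  · simp only [stepMatrix, of_apply, stepWt]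
    rw [← Finset.sum_filter, Finset.sum_const, nsmul_eq_mul, ← G.neighborFinset_eq_filter,
      G.card_neighborFinset_eq_degree]
    exact mul_inv_cancel₀ (Nat.cast_ne_zero.2 (hdeg x).ne')

theorem detailedBalance_stepMatrix (G : SimpleGraph V) :
    DetailedBalance (fun v ↦ (G.degree v : ℝ)) (stepMatrix G) := fun x y ↦ by
  by_cases h : G.Adj x y
  · have hx : (G.degree x : ℝ) ≠ 0 := Nat.cast_ne_zero.2 h.degree_pos_left.ne'
    have hy : (G.degree y : ℝ) ≠ 0 := Nat.cast_ne_zero.2 h.degree_pos_right.ne'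
    simp [stepMatrix, stepWt, h, h.symm, hx, hy]
  · simp [stepMatrix, stepWt, h, G.adj_comm y x]

theorem edist_le_one_of_stepMatrix_ne_zero (x y : V) (h : stepMatrix G x y ≠ 0) :
    G.edist x y ≤ 1 := by
  refine SimpleGraph.edist_le_one_iff_adj_or_eq.2 (Or.inl ?_)
  by_contra hxy
  exact h (by simp [stepMatrix, stepWt, hxy])

theorem walkExp_succ_last (G : SimpleGraph V) (x : V) (t : ℕ) (g : V → ℝ) :
    walkExp G (t + 1) x (fun p ↦ g (p (Fin.last (t + 1)))) =
      walkExp G t x (fun p ↦ (stepMatrix G *ᵥ g) (p (Fin.last t))) := by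
  unfold walkExp
  rw [← (Fin.snocEquiv fun _ : Fin (t + 2) ↦ V).sum_comp, Fintype.sum_prod_type, Finset.sum_comm]
  refine Finset.sum_congr rfl fun p _ ↦ ?_
  simp only [Fin.snocEquiv, Equiv.coe_fn_mk, Fin.snoc_apply_zero, Fin.snoc_last,
    Fin.prod_univ_castSucc, Fin.succ_castSucc, Fin.snoc_castSucc, Fin.succ_last, mulVec, dotProduct,
    stepMatrix, of_apply, Finset.mul_sum]
  refine Finset.sum_congr rfl fun y _ ↦ ?_
  split_ifs <;> ring

theorem walkExp_last (G : SimpleGraph V) (x : V) (t : ℕ) (g : V → ℝ) :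
    walkExp G t x (fun p ↦ g (p (Fin.last t))) = (stepMatrix G ^ t *ᵥ g) x := by
  induction t generalizing g with
  | zero =>
    unfold walkExp
    rw [← (Equiv.funUnique (Fin 1) V).symm.sum_comp]
    simp
  | succ t ih => rw [walkExp_succ_last, ih, mulVec_mulVec, ← pow_succ]

theorem sum_sqrt_degree_div_le {x : V} (hx : 0 < G.degree x) :
    ∑ y, √((G.degree y : ℝ) / G.degree x) ≤ Fintype.card V * √(Fintype.card V) := by
  rw [← nsmul_eq_mul]
  refine Finset.sum_le_card_nsmul _ _ _ fun y _ ↦ Real.sqrt_le_sqrt ?_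
  calc (G.degree y : ℝ) / G.degree x ≤ G.degree y :=
        div_le_self (Nat.cast_nonneg _) (Nat.one_le_cast.2 hx)
    _ ≤ Fintype.card V := Nat.cast_le.2 (G.degree_lt_card_verts y).le

theorem two_mul_log_two_mul_sum_sqrt_degree_div_le {x : V} (hx : 0 < G.degree x) :
    2 * Real.log (2 * ∑ y, √((G.degree y : ℝ) / G.degree x)) ≤
      5 * Real.log (Fintype.card V) := by
  set n := Fintype.card V
  have hn : (2 : ℝ) ≤ n := by
    exact_mod_cast (Nat.succ_le_of_lt hx).trans_lt (G.degree_lt_card_verts x)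
  have sum_pos : 0 < ∑ y, √((G.degree y : ℝ) / G.degree x) :=
    Finset.sum_pos' (fun y _ ↦ Real.sqrt_nonneg _) ⟨x, Finset.mem_univ x, by positivity⟩
  have log_le : Real.log (2 * ∑ y, √((G.degree y : ℝ) / G.degree x)) ≤
      Real.log (n * (n * √n)) := by
    gcongr
    exact sum_sqrt_degree_div_le hx
  have log_eq : Real.log (n * (n * √n)) = 5 / 2 * Real.log n := by
    rw [Real.log_mul (by positivity) (by positivity), Real.log_mul (by positivity) (by positivity),
      Real.log_sqrt (by positivity)]
    ring
  linarith

theorem sum_stepMatrix_pow_mul_dist_sq_le (hdeg : ∀ v, 0 < G.degree v) (x : V) (t : ℕ) :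
    ∑ y, (stepMatrix G ^ t) x y * (G.dist x y : ℝ) ^ 2 ≤
      t * (5 * Real.log (Fintype.card V)) := by
  refine ((detailedBalance_stepMatrix G).sum_pow_apply_mul_dist_sq_le
    (stepMatrix_mem_rowStochastic hdeg) (fun v ↦ Nat.cast_nonneg _)
    edist_le_one_of_stepMatrix_ne_zero (Nat.cast_pos.2 (hdeg x)) t).trans ?_
  rw [mul_comm 2, mul_assoc]
  exact mul_le_mul_of_nonneg_left (two_mul_log_two_mul_sum_sqrt_degree_div_le (hdeg x))
    (Nat.cast_nonneg t)

theorem walkExp_dist_last_le_sqrt (hdeg : ∀ v, 0 < G.degree v) (x : V) (t : ℕ) :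
    walkExp G t x (fun p ↦ (G.dist x (p (Fin.last t)) : ℝ)) ≤
      √(5 * Real.log (Fintype.card V)) * √t := by
  obtain ⟨hnonneg, hsum⟩ := mem_rowStochastic_iff_sum.1
    (pow_mem (stepMatrix_mem_rowStochastic hdeg) t)
  rw [walkExp_last G x t fun y ↦ (G.dist x y : ℝ), mul_comm, ← Real.sqrt_mul (Nat.cast_nonneg t)]
  exact Real.le_sqrt_of_sq_le <|
    (Real.pow_arith_mean_le_arith_mean_pow_of_even _ _ _ (fun y _ ↦ hnonneg x y) (hsum x)
      even_two).trans (sum_stepMatrix_pow_mul_dist_sq_le hdeg x t)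

theorem walkExp_nonneg (G : SimpleGraph V) (x : V) {t : ℕ} {f : (Fin (t + 1) → V) → ℝ}
    (hf : ∀ p, 0 ≤ f p) : 0 ≤ walkExp G t x f := by
  refine Finset.sum_nonneg fun p _ ↦ mul_nonneg ?_ (hf p)
  have (i : Fin t) : 0 ≤ stepWt G (p i.castSucc) (p i.succ) := by unfold stepWt; positivity
  split_ifs
  exacts [Finset.prod_nonneg fun i _ ↦ this i, le_rfl]

end SimpleRandomWalk

theorem summable_and_tsum_mul_sqrt_le_sqrt_tsum {ι : Type*} {μ f : ι → ℝ} (hμ : ∀ i, 0 ≤ μ i)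
    (hμ1 : HasSum μ 1) (hf : ∀ i, 0 ≤ f i) (hfμ : Summable fun i ↦ f i * μ i) :
    (Summable fun i ↦ μ i * √(f i)) ∧ ∑' i, μ i * √(f i) ≤ √(∑' i, f i * μ i) := by
  have cauchy_schwarz := Real.summable_and_inner_le_Lp_mul_Lq_tsum_of_nonneg .two_two
    (f := fun i ↦ √(μ i)) (g := fun i ↦ √(f i * μ i)) (fun i ↦ Real.sqrt_nonneg _)
    (fun i ↦ Real.sqrt_nonneg _)
  have hmul (i : ι) : √(μ i) * √(f i * μ i) = μ i * √(f i) := by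
    rw [Real.sqrt_mul (hf i)]
    linear_combination √(f i) * Real.mul_self_sqrt (hμ i)
  simp only [Real.rpow_two, Real.sq_sqrt (hμ _), Real.sq_sqrt (mul_nonneg (hf _) (hμ _)), hmul,
    hμ1.tsum_eq, ← Real.sqrt_eq_rpow, Real.sqrt_one, one_mul] at cauchy_schwarz
  exact cauchy_schwarz hμ1.summable hfμ

theorem expected_distance_at_random_time_general {V : Type} [Fintype V] {G : SimpleGraph V}
    (hdeg : ∀ v, 0 < G.degree v) (x0 : V) {μ : ℕ → ℝ} (hμ0 : ∀ s, 0 ≤ μ s) (hμ1 : HasSum μ 1)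
    (hmean_summable : Summable fun s : ℕ ↦ (s : ℝ) * μ s) :
    ∑' s : ℕ, μ s * walkExp G s x0 (fun p ↦ (G.dist x0 (p (Fin.last s)) : ℝ)) ≤
      √(5 * Real.log (Fintype.card V)) * √(∑' s : ℕ, (s : ℝ) * μ s) := by
  set c := √(5 * Real.log (Fintype.card V))
  obtain ⟨hsqrt, jensen⟩ :=
    summable_and_tsum_mul_sqrt_le_sqrt_tsum hμ0 hμ1 (fun s ↦ Nat.cast_nonneg s) hmean_summable
  have termwise (s : ℕ) : μ s * walkExp G s x0 (fun p ↦ (G.dist x0 (p (Fin.last s)) : ℝ)) ≤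
      c * (μ s * √s) := by
    rw [mul_left_comm]
    exact mul_le_mul_of_nonneg_left (walkExp_dist_last_le_sqrt hdeg x0 s) (hμ0 s)
  calc ∑' s : ℕ, μ s * walkExp G s x0 (fun p ↦ (G.dist x0 (p (Fin.last s)) : ℝ))
      ≤ ∑' s : ℕ, c * (μ s * √s) :=
        (Summable.of_nonneg_of_le (fun s ↦ mul_nonneg (hμ0 s)
          (walkExp_nonneg G x0 fun p ↦ Nat.cast_nonneg _)) termwise
          (hsqrt.mul_left c)).tsum_le_tsum termwise (hsqrt.mul_left c)
    _ = c * ∑' s : ℕ, μ s * √s := tsum_mul_left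
    _ ≤ c * √(∑' s : ℕ, (s : ℝ) * μ s) := by gcongr

/-- **Bound on `E[D₂]`.** If `S` is an `ℕ`-valued random variable (with distribution `μ`)
independent of the simple random walk on a connected simple graph `G` on `n ≥ 2` vertices,
and `E[S] ≤ 1 + √n·√(1 + 5 log n)`, then
`E[d(x_0, x_S)] ≤ 1 + √(1 + 5 log n)·√(1 + √n·√(1 + 5 log n))`.
Independence is expressed by writing `E[d(x_0,x_S)]` as the `μ`-mixture of the fixed-time
expectations `E[d(x_0,x_s)]`. -/
theorem expected_distance_at_random_time {V : Type} [Fintype V] (G : SimpleGraph V) (n : ℕ)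
    (hn : 2 ≤ n) (hcard : Fintype.card V = n) (hconn : G.Connected) (x0 : V)
    (μ : ℕ → ℝ) (hμ0 : ∀ s, 0 ≤ μ s) (hμ1 : HasSum μ 1)
    (hmean_summable : Summable (fun s : ℕ => (s : ℝ) * μ s))
    (hmean : ∑' s : ℕ, (s : ℝ) * μ s ≤ 1 + Real.sqrt n * Real.sqrt (1 + 5 * Real.log n)) :
    ∑' s : ℕ, μ s * walkExp G s x0 (fun p => (G.dist x0 (p (Fin.last s)) : ℝ))
      ≤ 1 + Real.sqrt (1 + 5 * Real.log n) *
          Real.sqrt (1 + Real.sqrt n * Real.sqrt (1 + 5 * Real.log n)) := by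
  subst hcard
  have : Nontrivial V := Fintype.one_lt_card_iff_nontrivial.1 hn
  have hdeg (v : V) : 0 < G.degree v := hconn.preconnected.degree_pos_of_nontrivial v
  calc _ ≤ _ := expected_distance_at_random_time_general hdeg x0 hμ0 hμ1 hmean_summable
    _ ≤ √(1 + 5 * Real.log (Fintype.card V)) *
          √(1 + √(Fintype.card V) * √(1 + 5 * Real.log (Fintype.card V))) := by
      gcongr
      exact le_add_of_nonneg_left zero_le_one
    _ ≤ _ := le_add_of_nonneg_left zero_le_one
end
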